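/- arXiv:1410.4235 — 3 statements merged into one kernel-verified Lean document; each statement's English description precedes it below -/
import Mathlib

section
/- Let (S,·,1) be a partial monoid, commutative or not. Then the predicate transformers (2^S)^{2^S}, ordered pointwise by inclusion and equipped with (i) convolution (F·G) X = ⨆_{X=Y·Z} (F Y)·(G Z) over complex-product decompositions of X ⊆ S, with unit series 𝟙 mapping {1} to {1} and every other subset to ∅, and (ii) function composition F∘G with unit the identity function id, form a weak unital bi-quantale: both operations are associative and unital, convolution distributes over arbitrary suprema on both sides, composition distributes over arbitrary suprema on the right ((⨆_i F_i)∘G = ⨆_i (F_i∘G)), but left distributivity of composition (F∘⨆_i G_i = ⨆_i (F∘G_i)) may fail. The convolution is commutative if S is commutative. -/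
/-!
The powerset of a partial monoid is a unital quantale under the complex product: the complex
product is associative (`cprod_assoc`), has unit `{1}`, and preserves unions in both arguments.
Each law of convolution is inherited from this. By `mem_ptConv`, membership in `(F·G) X` is an
existential statement over the splittings `X = Y·Z`. For associativity, both bracketings range over
the triples `V, W, Z` with `V·W·Z = X`, and the values agree by associativity of the partial
product. For unitality, only the splitting with a factor `{1}` contributes. Distributivity is the
commutation of existential quantifiers.

Composition distributes on the right since suprema are pointwise. On the left it fails for the
empty supremum as soon as `F ∅ ≠ ∅`.
-/

/-- A partial semigroup: a partial multiplication (undefinedness `⊥` modelled by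
`Option`) that is associative in the strong (Kleisli) sense. -/
structure PartialSemigroup (S : Type*) where
  pmul : S → S → Option S
  passoc : ∀ x y z : S,
    (pmul x y).bind (fun w => pmul w z) = (pmul y z).bind (fun w => pmul x w)

/-- A partial monoid: a partial semigroup with a unit. -/
structure PartialMonoid (S : Type*) extends PartialSemigroup S where
  unit : S
  unit_pmul : ∀ x : S, pmul unit x = some x
  pmul_unit : ∀ x : S, pmul x unit = some x

/-- The complex product on the powerset of a partial semigroup:
`X·Y = {x·y | x ∈ X, y ∈ Y, x·y defined}`. -/
def cprod {S : Type*} (P : PartialSemigroup S) (X Y : Set S) : Set S :=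
  {z | ∃ x ∈ X, ∃ y ∈ Y, P.pmul x y = some z}

/-- Convolution of predicate transformers `F G : 2^S → 2^S`:
`(F·G) X = ⨆_{X = Y·Z} (F Y)·(G Z)`, the splittings ranging over
complex-product decompositions of `X`. -/
noncomputable def ptConv {S : Type*} (P : PartialMonoid S) (F G : Set S → Set S) :
    Set S → Set S :=
  fun X => ⨆ p : {p : Set S × Set S // cprod P.toPartialSemigroup p.1 p.2 = X},
    cprod P.toPartialSemigroup (F p.1.1) (G p.1.2)

open Classical in
/-- Unit series for predicate transformers: maps `{1}` to `{1}` and every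
other subset to `∅`. -/
noncomputable def ptUnit {S : Type*} (P : PartialMonoid S) : Set S → Set S :=
  fun X => if X = {P.unit} then {P.unit} else ∅

section Helpers

variable {S : Type*}

theorem mem_cprod (P : PartialSemigroup S) (X Y : Set S) (z : S) :
    z ∈ cprod P X Y ↔ ∃ x ∈ X, ∃ y ∈ Y, P.pmul x y = some z := Iff.rfl

/-- Elementwise form of the associativity of a partial product. -/
theorem pmul_assoc_iff (P : PartialSemigroup S) (x y z t : S) :
    (∃ w, P.pmul x y = some w ∧ P.pmul w z = some t) ↔
      ∃ w, P.pmul y z = some w ∧ P.pmul x w = some t := by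
  have h := P.passoc x y z
  rw [← Option.bind_eq_some_iff, ← Option.bind_eq_some_iff, h]

theorem cprod_assoc (P : PartialSemigroup S) (X Y Z : Set S) :
    cprod P (cprod P X Y) Z = cprod P X (cprod P Y Z) := by
  ext t
  constructor
  · rintro ⟨w, ⟨x, hx, y, hy, hw⟩, z, hz, ht⟩
    obtain ⟨v, hv, ht'⟩ := (pmul_assoc_iff P x y z t).1 ⟨w, hw, ht⟩
    exact ⟨x, hx, v, ⟨y, hy, z, hz, hv⟩, ht'⟩
  · rintro ⟨x, hx, w, ⟨y, hy, z, hz, hw⟩, ht⟩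
    obtain ⟨v, hv, ht'⟩ := (pmul_assoc_iff P x y z t).2 ⟨w, hw, ht⟩
    exact ⟨v, ⟨x, hx, y, hy, hv⟩, z, hz, ht'⟩

theorem unit_cprod (P : PartialMonoid S) (X : Set S) :
    cprod P.toPartialSemigroup {P.unit} X = X := by
  ext z
  simp [mem_cprod, P.unit_pmul]

theorem cprod_unit (P : PartialMonoid S) (X : Set S) :
    cprod P.toPartialSemigroup X {P.unit} = X := by
  ext z
  simp [mem_cprod, P.pmul_unit]

theorem cprod_comm (P : PartialSemigroup S) (h : ∀ x y, P.pmul x y = P.pmul y x) (X Y : Set S) :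
    cprod P X Y = cprod P Y X := by
  ext z
  constructor
  · rintro ⟨x, hx, y, hy, hz⟩
    exact ⟨y, hy, x, hx, by rw [h, hz]⟩
  · rintro ⟨x, hx, y, hy, hz⟩
    exact ⟨y, hy, x, hx, by rw [h, hz]⟩

theorem mem_ptConv (P : PartialMonoid S) (F G : Set S → Set S) (X : Set S) (z : S) :
    z ∈ ptConv P F G X ↔ ∃ Y Z, cprod P.toPartialSemigroup Y Z = X ∧
      z ∈ cprod P.toPartialSemigroup (F Y) (G Z) := by
  simp [ptConv]

theorem mem_ptUnit (P : PartialMonoid S) (X : Set S) (z : S) :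
    z ∈ ptUnit P X ↔ X = {P.unit} ∧ z = P.unit := by
  by_cases h : X = {P.unit} <;> simp [ptUnit, h]

theorem ptConv_assoc (P : PartialMonoid S) (F G H : Set S → Set S) :
    ptConv P (ptConv P F G) H = ptConv P F (ptConv P G H) := by
  ext X t
  simp only [mem_ptConv]
  constructor
  · rintro ⟨_, Z, rfl, w, hw, z, hz, ht⟩
    obtain ⟨V, W, rfl, hvw⟩ := (mem_ptConv ..).1 hw
    have hmem : t ∈ cprod P.toPartialSemigroup
        (cprod P.toPartialSemigroup (F V) (G W)) (H Z) := ⟨w, hvw, z, hz, ht⟩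
    rw [cprod_assoc] at hmem
    obtain ⟨x, hx, v, hv, ht⟩ := hmem
    exact ⟨V, _, (cprod_assoc _ V W Z).symm, x, hx, v, (mem_ptConv ..).2 ⟨W, Z, rfl, hv⟩, ht⟩
  · rintro ⟨V, _, rfl, x, hx, v, hv, ht⟩
    obtain ⟨W, Z, rfl, hwz⟩ := (mem_ptConv ..).1 hv
    have hmem : t ∈ cprod P.toPartialSemigroup (F V)
        (cprod P.toPartialSemigroup (G W) (H Z)) := ⟨x, hx, v, hwz, ht⟩
    rw [← cprod_assoc] at hmem
    obtain ⟨w, hw, z, hz, ht⟩ := hmem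
    exact ⟨_, Z, cprod_assoc _ V W Z, w, (mem_ptConv ..).2 ⟨V, W, rfl, hw⟩, z, hz, ht⟩

theorem unit_ptConv (P : PartialMonoid S) (F : Set S → Set S) : ptConv P (ptUnit P) F = F := by
  ext X t
  rw [mem_ptConv]
  constructor
  · rintro ⟨Y, Z, rfl, x, hx, z, hz, ht⟩
    obtain ⟨rfl, rfl⟩ := (mem_ptUnit ..).1 hx
    rw [P.unit_pmul, Option.some_inj] at ht
    rwa [unit_cprod, ← ht]
  · intro ht
    exact ⟨{P.unit}, X, unit_cprod P X, P.unit, (mem_ptUnit ..).2 ⟨rfl, rfl⟩, t, ht,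
      P.unit_pmul t⟩

theorem ptConv_unit (P : PartialMonoid S) (F : Set S → Set S) : ptConv P F (ptUnit P) = F := by
  ext X t
  rw [mem_ptConv]
  constructor
  · rintro ⟨Y, Z, rfl, x, hx, z, hz, ht⟩
    obtain ⟨rfl, rfl⟩ := (mem_ptUnit ..).1 hz
    rw [P.pmul_unit, Option.some_inj] at ht
    rwa [cprod_unit, ← ht]
  · intro ht
    exact ⟨X, {P.unit}, cprod_unit P X, t, ht, P.unit, (mem_ptUnit ..).2 ⟨rfl, rfl⟩,
      P.pmul_unit t⟩

theorem mem_sSup_apply (𝒢 : Set (Set S → Set S)) (X : Set S) (z : S) :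
    z ∈ sSup 𝒢 X ↔ ∃ G ∈ 𝒢, z ∈ G X := by
  simp [sSup_apply]

theorem mem_biSup_apply {ι : Type*} (I : Set ι) (f : ι → Set S → Set S) (X : Set S) (z : S) :
    z ∈ (⨆ i ∈ I, f i) X ↔ ∃ i ∈ I, z ∈ f i X := by
  simp [iSup_apply]

theorem ptConv_sSup (P : PartialMonoid S) (F : Set S → Set S) (𝒢 : Set (Set S → Set S)) :
    ptConv P F (sSup 𝒢) = ⨆ G ∈ 𝒢, ptConv P F G := by
  ext X t
  simp only [mem_biSup_apply, mem_ptConv, mem_cprod, mem_sSup_apply]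
  constructor
  · rintro ⟨Y, Z, h, x, hx, z, ⟨G, hG, hz⟩, ht⟩
    exact ⟨G, hG, Y, Z, h, x, hx, z, hz, ht⟩
  · rintro ⟨G, hG, Y, Z, h, x, hx, z, hz, ht⟩
    exact ⟨Y, Z, h, x, hx, z, ⟨G, hG, hz⟩, ht⟩

theorem sSup_ptConv (P : PartialMonoid S) (𝒢 : Set (Set S → Set S)) (F : Set S → Set S) :
    ptConv P (sSup 𝒢) F = ⨆ G ∈ 𝒢, ptConv P G F := by
  ext X t
  simp only [mem_biSup_apply, mem_ptConv, mem_cprod, mem_sSup_apply]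
  constructor
  · rintro ⟨Y, Z, h, x, ⟨G, hG, hx⟩, z, hz, ht⟩
    exact ⟨G, hG, Y, Z, h, x, hx, z, hz, ht⟩
  · rintro ⟨G, hG, Y, Z, h, x, hx, z, hz, ht⟩
    exact ⟨Y, Z, h, x, ⟨G, hG, hx⟩, z, hz, ht⟩

theorem ptConv_comm (P : PartialMonoid S) (h : ∀ x y, P.pmul x y = P.pmul y x)
    (F G : Set S → Set S) : ptConv P F G = ptConv P G F := by
  ext X t
  simp only [mem_ptConv]
  constructor
  · rintro ⟨Y, Z, hX, ht⟩
    exact ⟨Z, Y, by rw [cprod_comm _ h, hX], by rwa [cprod_comm _ h]⟩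
  · rintro ⟨Y, Z, hX, ht⟩
    exact ⟨Z, Y, by rw [cprod_comm _ h, hX], by rwa [cprod_comm _ h]⟩

/-- The one-element monoid. -/
def trivialPartialMonoid : PartialMonoid Unit where
  pmul _ _ := some ()
  passoc _ _ _ := rfl
  unit := ()
  unit_pmul _ := rfl
  pmul_unit _ := rfl

end Helpers

/-- The predicate transformers `(2^S)^{2^S}` over a partial monoid, with
the convolution over complex-product decompositions (unit `𝟙 = ptUnit`) and
function composition (unit `id`), form a weak unital bi-quantale: convolution
distributes over arbitrary suprema on both sides, composition distributes over
arbitrary suprema on the right, but left distributivity of composition may fail.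
The convolution is commutative if `S` is commutative. -/
theorem stmt7 {S : Type*} (P : PartialMonoid S) :
    -- convolution: associative, unital, distributes over suprema on both sides
    (∀ F G H : Set S → Set S, ptConv P (ptConv P F G) H = ptConv P F (ptConv P G H)) ∧
    (∀ F : Set S → Set S, ptConv P (ptUnit P) F = F ∧ ptConv P F (ptUnit P) = F) ∧
    (∀ (F : Set S → Set S) (𝒢 : Set (Set S → Set S)),
      ptConv P F (sSup 𝒢) = ⨆ G ∈ 𝒢, ptConv P F G) ∧
    (∀ (𝒢 : Set (Set S → Set S)) (F : Set S → Set S),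
      ptConv P (sSup 𝒢) F = ⨆ G ∈ 𝒢, ptConv P G F) ∧
    -- composition: associative and unital with the identity function
    (∀ F G H : Set S → Set S, (F ∘ G) ∘ H = F ∘ (G ∘ H)) ∧
    (∀ F : Set S → Set S, id ∘ F = F ∧ F ∘ id = F) ∧
    -- composition distributes over arbitrary suprema on the right
    (∀ (ℱ : Set (Set S → Set S)) (G : Set S → Set S),
      (sSup ℱ) ∘ G = ⨆ F ∈ ℱ, F ∘ G) ∧
    -- but left distributivity of composition may fail
    (¬ ∀ (T : Type) (_ : PartialMonoid T) (F : Set T → Set T) (𝒢 : Set (Set T → Set T)),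
      F ∘ (sSup 𝒢) = ⨆ G ∈ 𝒢, F ∘ G) ∧
    -- the convolution is commutative if S is commutative
    ((∀ x y : S, P.pmul x y = P.pmul y x) →
      ∀ F G : Set S → Set S, ptConv P F G = ptConv P G F) := by
  refine ⟨ptConv_assoc P, fun F => ⟨unit_ptConv P F, ptConv_unit P F⟩, ptConv_sSup P,
    sSup_ptConv P, fun _ _ _ => rfl, fun _ => ⟨rfl, rfl⟩, ?_, ?_, ptConv_comm P⟩
  · intro ℱ G
    ext X t
    simp only [mem_biSup_apply, Function.comp_apply, mem_sSup_apply]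
  · intro h
    -- the constant transformer with value `univ` does not preserve the empty supremum
    have h0 := congrFun (h Unit trivialPartialMonoid (fun _ => Set.univ) ∅) ∅
    have h1 : () ∈ (⨆ G ∈ (∅ : Set (Set Unit → Set Unit)), (fun _ => Set.univ) ∘ G) ∅ :=
      h0 ▸ Set.mem_univ ()
    rw [mem_biSup_apply] at h1
    obtain ⟨_, hG, _⟩ := h1
    exact hG
end

section
/- Let (S,∘,•) be a partial bi-semigroup, i.e. a set carrying two partial semigroup structures ∘ and •. If (Q,≤,∘,•) is a bi-quantale, i.e. a complete lattice that is a quantale under each of the operations ∘ and •, then Q^S, ordered pointwise with the two convolutions (f∘g) x = ⨆_{x=y∘z} f y ∘ g z and (f•g) x = ⨆_{x=y•z} f y • g z, is a bi-quantale. Distributivity, unitality (when S is a partial bi-monoid with respective units and Q is unital) and commutativity of each operation lift from S and Q to Q^S. -/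
/-- A quantale structure on a complete lattice: an associative multiplication
distributing over arbitrary suprema in both arguments. -/
structure QuantaleStruct (Q : Type*) [CompleteLattice Q] where
  mul : Q → Q → Q
  mul_assoc' : ∀ x y z : Q, mul (mul x y) z = mul x (mul y z)
  mul_sSup : ∀ (x : Q) (s : Set Q), mul x (sSup s) = ⨆ y ∈ s, mul x y
  sSup_mul : ∀ (s : Set Q) (x : Q), mul (sSup s) x = ⨆ y ∈ s, mul y x

/-- Convolution of power series `f g : S → Q`:
`(f·g) x = ⨆_{x = y·z} (f y) · (g z)`, over all defined splittings. -/
noncomputable def convol {S Q : Type*} [CompleteLattice Q]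
    (P : PartialSemigroup S) (Qm : QuantaleStruct Q) (f g : S → Q) : S → Q :=
  fun x => ⨆ p : {p : S × S // P.pmul p.1 p.2 = some x}, Qm.mul (f p.1.1) (g p.1.2)

open Classical in
/-- The unit power series: maps `one : S` to `e : Q` and everything else to `⊥`. -/
noncomputable def unitSeries {S Q : Type*} [CompleteLattice Q] (one : S) (e : Q) : S → Q :=
  fun x => if x = one then e else ⊥

theorem QuantaleStruct.mul_iSup {Q : Type*} {ι : Sort*} [CompleteLattice Q] (Qm : QuantaleStruct Q)
    (a : Q) (u : ι → Q) : Qm.mul a (⨆ i, u i) = ⨆ i, Qm.mul a (u i) := by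
  rw [iSup, Qm.mul_sSup, iSup_range]

theorem QuantaleStruct.iSup_mul {Q : Type*} {ι : Sort*} [CompleteLattice Q] (Qm : QuantaleStruct Q)
    (u : ι → Q) (a : Q) : Qm.mul (⨆ i, u i) a = ⨆ i, Qm.mul (u i) a := by
  rw [iSup, Qm.sSup_mul, iSup_range]

theorem QuantaleStruct.mul_bot {Q : Type*} [CompleteLattice Q] (Qm : QuantaleStruct Q)
    (a : Q) : Qm.mul a ⊥ = ⊥ := by
  simpa using Qm.mul_sSup a ∅

theorem QuantaleStruct.bot_mul {Q : Type*} [CompleteLattice Q] (Qm : QuantaleStruct Q)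
    (a : Q) : Qm.mul ⊥ a = ⊥ := by
  simpa using Qm.sSup_mul ∅ a

/-- Rebracketing of a two-step splitting from left to right. -/
theorem PartialSemigroup.assoc_right {S : Type*} (P : PartialSemigroup S) {a b c y x : S}
    (hy : P.pmul a b = some y) (hx : P.pmul y c = some x) :
    ∃ z, P.pmul b c = some z ∧ P.pmul a z = some x := by
  have h := P.passoc a b c
  rw [hy, Option.bind_some, hx] at h
  exact Option.bind_eq_some_iff.1 h.symm

/-- Rebracketing of a two-step splitting from right to left. -/
theorem PartialSemigroup.assoc_left {S : Type*} (P : PartialSemigroup S) {a b c z x : S}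
    (hz : P.pmul b c = some z) (hx : P.pmul a z = some x) :
    ∃ y, P.pmul a b = some y ∧ P.pmul y c = some x := by
  have h := P.passoc a b c
  rw [hz, Option.bind_some, hx] at h
  exact Option.bind_eq_some_iff.1 h

section Convolution

variable {S Q : Type*} [CompleteLattice Q] (P : PartialSemigroup S) (Qm : QuantaleStruct Q)

theorem le_convol (f g : S → Q) {y z x : S} (h : P.pmul y z = some x) :
    Qm.mul (f y) (g z) ≤ convol P Qm f g x :=
  le_iSup (fun p : {p : S × S // P.pmul p.1 p.2 = some x} => Qm.mul (f p.1.1) (g p.1.2))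
    ⟨(y, z), h⟩

theorem convol_le {f g : S → Q} {x : S} {a : Q}
    (h : ∀ y z, P.pmul y z = some x → Qm.mul (f y) (g z) ≤ a) : convol P Qm f g x ≤ a :=
  iSup_le fun p => h p.1.1 p.1.2 p.2

theorem QuantaleStruct.mul_le_mul (Qm : QuantaleStruct Q) {a b c d : Q} (hab : a ≤ b)
    (hcd : c ≤ d) : Qm.mul a c ≤ Qm.mul b d := by
  have h₁ : Qm.mul a c ≤ Qm.mul b c := by
    rw [← sSup_pair.trans (sup_eq_right.2 hab), Qm.sSup_mul]
    exact le_iSup₂_of_le a (by simp) le_rfl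
  have h₂ : Qm.mul b c ≤ Qm.mul b d := by
    rw [← sSup_pair.trans (sup_eq_right.2 hcd), Qm.mul_sSup]
    exact le_iSup₂_of_le c (by simp) le_rfl
  exact h₁.trans h₂

theorem convol_assoc (f g h : S → Q) :
    convol P Qm (convol P Qm f g) h = convol P Qm f (convol P Qm g h) := by
  funext x
  apply le_antisymm
  · refine convol_le P Qm fun y c hx => ?_
    rw [convol, Qm.iSup_mul]
    refine iSup_le fun ⟨⟨a, b⟩, hy⟩ => ?_
    obtain ⟨z, hz, hx'⟩ := P.assoc_right hy hx
    rw [Qm.mul_assoc']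
    exact (Qm.mul_le_mul le_rfl (le_convol P Qm g h hz)).trans (le_convol P Qm f _ hx')
  · refine convol_le P Qm fun a z hx => ?_
    rw [convol.eq_def P Qm g h, Qm.mul_iSup]
    refine iSup_le fun ⟨⟨b, c⟩, hz⟩ => ?_
    obtain ⟨y, hy, hx'⟩ := P.assoc_left hz hx
    rw [← Qm.mul_assoc']
    exact (Qm.mul_le_mul (le_convol P Qm f g hy) le_rfl).trans (le_convol P Qm _ h hx')

theorem convol_sSup (f : S → Q) (G : Set (S → Q)) :
    convol P Qm f (sSup G) = ⨆ g ∈ G, convol P Qm f g := by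
  funext x
  simp only [convol, sSup_eq_iSup, iSup_apply, Qm.mul_iSup]
  rw [iSup_comm]
  exact iSup_congr fun g => iSup_comm

theorem sSup_convol (G : Set (S → Q)) (f : S → Q) :
    convol P Qm (sSup G) f = ⨆ g ∈ G, convol P Qm g f := by
  funext x
  simp only [convol, sSup_eq_iSup, iSup_apply, Qm.iSup_mul]
  rw [iSup_comm]
  exact iSup_congr fun g => iSup_comm

theorem unitSeries_convol {one : S} (hone : ∀ x, P.pmul one x = some x) {e : Q}
    (he : ∀ a, Qm.mul e a = a) (f : S → Q) : convol P Qm (unitSeries one e) f = f := by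
  funext x
  apply le_antisymm
  · refine convol_le P Qm fun y z hx => ?_
    by_cases hy : y = one
    · subst hy
      obtain rfl : z = x := Option.some.inj ((hone z).symm.trans hx)
      simp [unitSeries, he]
    · simp [unitSeries, hy, Qm.bot_mul]
  · simpa [unitSeries, he] using le_convol P Qm (unitSeries one e) f (hone x)

theorem convol_unitSeries {one : S} (hone : ∀ x, P.pmul x one = some x) {e : Q}
    (he : ∀ a, Qm.mul a e = a) (f : S → Q) : convol P Qm f (unitSeries one e) = f := by
  funext x
  apply le_antisymm
  · refine convol_le P Qm fun y z hx => ?_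
    by_cases hz : z = one
    · subst hz
      obtain rfl : y = x := Option.some.inj ((hone y).symm.trans hx)
      simp [unitSeries, he]
    · simp [unitSeries, hz, Qm.mul_bot]
  · simpa [unitSeries, he] using le_convol P Qm f (unitSeries one e) (hone x)

theorem convol_comm (hP : ∀ x y, P.pmul x y = P.pmul y x)
    (hQ : ∀ a b, Qm.mul a b = Qm.mul b a) (f g : S → Q) :
    convol P Qm f g = convol P Qm g f := by
  have key (f g : S → Q) : convol P Qm f g ≤ convol P Qm g f := fun x =>
    convol_le P Qm fun y z hx => by
      rw [hQ]
      exact le_convol P Qm g f ((hP z y).trans hx)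
  exact le_antisymm (key f g) (key g f)

end Convolution

theorem pi_inf_sSup {S Q : Type*} [CompleteLattice Q]
    (hQ : ∀ (a : Q) (s : Set Q), a ⊓ sSup s = ⨆ b ∈ s, a ⊓ b) (f : S → Q) (A : Set (S → Q)) :
    f ⊓ sSup A = ⨆ g ∈ A, f ⊓ g := by
  funext x
  have h := hQ (f x) ((fun g : S → Q => g x) '' A)
  rw [sSup_image, iSup_image] at h
  simpa [sSup_eq_iSup, iSup_apply] using h

theorem pi_sup_sInf {S Q : Type*} [CompleteLattice Q]
    (hQ : ∀ (a : Q) (s : Set Q), a ⊔ sInf s = ⨅ b ∈ s, a ⊔ b) (f : S → Q) (A : Set (S → Q)) :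
    f ⊔ sInf A = ⨅ g ∈ A, f ⊔ g := by
  funext x
  have h := hQ (f x) ((fun g : S → Q => g x) '' A)
  rw [sInf_image, iInf_image] at h
  simpa [sInf_eq_iInf, iInf_apply] using h

/-- Lifting over bi-semigroups: if `(S,∘,•)` is a partial bi-semigroup (two
partial semigroup structures `P₁, P₂` on `S`) and `(Q,≤,∘,•)` a bi-quantale
(two quantale structures `Qm₁, Qm₂` on the complete lattice `Q`), then `Q^S`
with the two convolutions is a bi-quantale; distributivity, unitality and
commutativity of each operation lift from `S` and `Q` to `Q^S`. -/
theorem stmt9 {S Q : Type*} [CompleteLattice Q]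
    (P₁ P₂ : PartialSemigroup S) (Qm₁ Qm₂ : QuantaleStruct Q) :
    -- first convolution: a quantale structure on Q^S
    (∀ f g h : S → Q,
      convol P₁ Qm₁ (convol P₁ Qm₁ f g) h = convol P₁ Qm₁ f (convol P₁ Qm₁ g h)) ∧
    (∀ (f : S → Q) (G : Set (S → Q)), convol P₁ Qm₁ f (sSup G) = ⨆ g ∈ G, convol P₁ Qm₁ f g) ∧
    (∀ (G : Set (S → Q)) (f : S → Q), convol P₁ Qm₁ (sSup G) f = ⨆ g ∈ G, convol P₁ Qm₁ g f) ∧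
    -- second convolution: a quantale structure on Q^S
    (∀ f g h : S → Q,
      convol P₂ Qm₂ (convol P₂ Qm₂ f g) h = convol P₂ Qm₂ f (convol P₂ Qm₂ g h)) ∧
    (∀ (f : S → Q) (G : Set (S → Q)), convol P₂ Qm₂ f (sSup G) = ⨆ g ∈ G, convol P₂ Qm₂ f g) ∧
    (∀ (G : Set (S → Q)) (f : S → Q), convol P₂ Qm₂ (sSup G) f = ⨆ g ∈ G, convol P₂ Qm₂ g f) ∧
    -- distributivity of the lattice lifts
    ((∀ (a : Q) (s : Set Q), a ⊓ sSup s = ⨆ b ∈ s, a ⊓ b) →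
      ∀ (f : S → Q) (A : Set (S → Q)), f ⊓ sSup A = ⨆ g ∈ A, f ⊓ g) ∧
    ((∀ (a : Q) (s : Set Q), a ⊔ sInf s = ⨅ b ∈ s, a ⊔ b) →
      ∀ (f : S → Q) (A : Set (S → Q)), f ⊔ sInf A = ⨅ g ∈ A, f ⊔ g) ∧
    -- unitality lifts for each operation (when S is a partial bi-monoid and Q unital)
    (∀ one : S, (∀ x : S, P₁.pmul one x = some x) → (∀ x : S, P₁.pmul x one = some x) →
      ∀ e : Q, (∀ a : Q, Qm₁.mul e a = a) → (∀ a : Q, Qm₁.mul a e = a) →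
        ∀ f : S → Q,
          convol P₁ Qm₁ (unitSeries one e) f = f ∧ convol P₁ Qm₁ f (unitSeries one e) = f) ∧
    (∀ one : S, (∀ x : S, P₂.pmul one x = some x) → (∀ x : S, P₂.pmul x one = some x) →
      ∀ e : Q, (∀ a : Q, Qm₂.mul e a = a) → (∀ a : Q, Qm₂.mul a e = a) →
        ∀ f : S → Q,
          convol P₂ Qm₂ (unitSeries one e) f = f ∧ convol P₂ Qm₂ f (unitSeries one e) = f) ∧
    -- commutativity lifts for each operation
    ((∀ x y : S, P₁.pmul x y = P₁.pmul y x) → (∀ a b : Q, Qm₁.mul a b = Qm₁.mul b a) →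
      ∀ f g : S → Q, convol P₁ Qm₁ f g = convol P₁ Qm₁ g f) ∧
    ((∀ x y : S, P₂.pmul x y = P₂.pmul y x) → (∀ a b : Q, Qm₂.mul a b = Qm₂.mul b a) →
      ∀ f g : S → Q, convol P₂ Qm₂ f g = convol P₂ Qm₂ g f) := by
  exact ⟨convol_assoc P₁ Qm₁, convol_sSup P₁ Qm₁, sSup_convol P₁ Qm₁,
    convol_assoc P₂ Qm₂, convol_sSup P₂ Qm₂, sSup_convol P₂ Qm₂,
    pi_inf_sSup, pi_sup_sInf,
    fun _ hl hr _ el er f =>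
      ⟨unitSeries_convol P₁ Qm₁ hl el f, convol_unitSeries P₁ Qm₁ hr er f⟩,
    fun _ hl hr _ el er f =>
      ⟨unitSeries_convol P₂ Qm₂ hl el f, convol_unitSeries P₂ Qm₂ hr er f⟩,
    convol_comm P₁ Qm₁, convol_comm P₂ Qm₂⟩
end

section
/- Let (S₁,∘) and (S₂,•) be partial semigroups and (Q,≤,∘,•) a bi-quantale. Then Q^{S₁×S₂}, ordered pointwise and equipped with the two convolutions (F∘G) x y = ⨆_{x=x₁∘x₂} (F x₁ y) ∘ (G x₂ y) and (F•G) x y = ⨆_{y=y₁•y₂} (F x y₁) • (G x y₂), is a bi-quantale; if Q is distributive, so is Q^{S₁×S₂}. It is unital (with units 𝟙∘ and 𝟙• defined by 𝟙∘ x y = 1∘ iff x is the unit of S₁ and 0 otherwise, and 𝟙• x y = 1• iff y is the unit of S₂ and 0 otherwise) whenever Q is unital and S₁, S₂ are partial monoids. Each convolution on Q^{S₁×S₂} is commutative if the corresponding composition on its source semigroup and on Q are commutative. -/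
/-- Convolution in the first coordinate:
`(F∘G) x y = ⨆_{x = x₁∘x₂} (F x₁ y) ∘ (G x₂ y)`. -/
noncomputable def convol₁ {S₁ S₂ Q : Type*} [CompleteLattice Q]
    (P₁ : PartialSemigroup S₁) (Qm : QuantaleStruct Q) (F G : S₁ → S₂ → Q) :
    S₁ → S₂ → Q :=
  fun x y => ⨆ p : {p : S₁ × S₁ // P₁.pmul p.1 p.2 = some x},
    Qm.mul (F p.1.1 y) (G p.1.2 y)

/-- Convolution in the second coordinate:
`(F•G) x y = ⨆_{y = y₁•y₂} (F x y₁) • (G x y₂)`. -/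
noncomputable def convol₂ {S₁ S₂ Q : Type*} [CompleteLattice Q]
    (P₂ : PartialSemigroup S₂) (Qm : QuantaleStruct Q) (F G : S₁ → S₂ → Q) :
    S₁ → S₂ → Q :=
  fun x y => ⨆ p : {p : S₂ × S₂ // P₂.pmul p.1 p.2 = some y},
    Qm.mul (F x p.1.1) (G x p.1.2)

open Classical in
/-- The unit series `𝟙∘`: `𝟙∘ x y = e` iff `x = one`, and `0 = ⊥` otherwise. -/
noncomputable def unitSeries₁ {S₁ S₂ Q : Type*} [CompleteLattice Q] (one : S₁) (e : Q) :
    S₁ → S₂ → Q :=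
  fun x _ => if x = one then e else ⊥

open Classical in
/-- The unit series `𝟙•`: `𝟙• x y = e` iff `y = one`, and `0 = ⊥` otherwise. -/
noncomputable def unitSeries₂ {S₁ S₂ Q : Type*} [CompleteLattice Q] (one : S₂) (e : Q) :
    S₁ → S₂ → Q :=
  fun _ y => if y = one then e else ⊥

namespace PartialSemigroup

variable {S : Type*} (P : PartialSemigroup S)

lemma assoc_split {u v w a x : S} (ha : P.pmul u v = some a) (hx : P.pmul a w = some x) :
    ∃ b, P.pmul v w = some b ∧ P.pmul u b = some x := by
  have h := P.passoc u v w
  rw [ha, Option.bind_some, hx] at h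
  exact Option.bind_eq_some_iff.mp h.symm

lemma assoc_split_symm {u v w b x : S} (hb : P.pmul v w = some b) (hx : P.pmul u b = some x) :
    ∃ a, P.pmul u v = some a ∧ P.pmul a w = some x := by
  have h := P.passoc u v w
  rw [hb, Option.bind_some, hx] at h
  exact Option.bind_eq_some_iff.mp h

end PartialSemigroup

namespace QuantaleStruct

variable {Q : Type*} [CompleteLattice Q] (M : QuantaleStruct Q)

lemma mul_iSup' {ι : Sort*} (a : Q) (f : ι → Q) : M.mul a (⨆ i, f i) = ⨆ i, M.mul a (f i) := by
  rw [iSup, M.mul_sSup, iSup_range]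

lemma iSup_mul' {ι : Sort*} (f : ι → Q) (a : Q) : M.mul (⨆ i, f i) a = ⨆ i, M.mul (f i) a := by
  rw [iSup, M.sSup_mul, iSup_range]

lemma mul_bot' (a : Q) : M.mul a ⊥ = ⊥ := by
  simpa using M.mul_sSup a ∅

lemma bot_mul' (a : Q) : M.mul ⊥ a = ⊥ := by
  simpa using M.sSup_mul ∅ a

end QuantaleStruct

section Convolution

variable {S Q : Type*} [CompleteLattice Q] (P : PartialSemigroup S) (M : QuantaleStruct Q)

/-- One-dimensional convolution on `S → Q`: the supremum of `f x₁ * g x₂` over all defined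
splittings `x = x₁x₂`. -/
noncomputable def conv (f g : S → Q) (x : S) : Q :=
  ⨆ p : {p : S × S // P.pmul p.1 p.2 = some x}, M.mul (f p.1.1) (g p.1.2)

variable {P} in
lemma le_conv (f g : S → Q) {u v x : S} (h : P.pmul u v = some x) :
    M.mul (f u) (g v) ≤ conv P M f g x :=
  le_iSup (fun p : {p : S × S // P.pmul p.1 p.2 = some x} => M.mul (f p.1.1) (g p.1.2))
    ⟨(u, v), h⟩

lemma conv_le {f g : S → Q} {x : S} {c : Q}
    (h : ∀ u v, P.pmul u v = some x → M.mul (f u) (g v) ≤ c) : conv P M f g x ≤ c :=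
  iSup_le fun p => h _ _ p.2

lemma conv_assoc (f g h : S → Q) (x : S) :
    conv P M (conv P M f g) h x = conv P M f (conv P M g h) x := by
  apply le_antisymm
  · refine conv_le P M fun a w hx => ?_
    rw [conv, M.iSup_mul']
    refine iSup_le fun ⟨⟨u, v⟩, ha⟩ => ?_
    obtain ⟨b, hb, hub⟩ := P.assoc_split ha hx
    rw [M.mul_assoc']
    refine le_trans ?_ (le_conv M _ _ hub)
    -- Left multiplication commutes with the supremum over splittings of `b`, and `vw` is one.
    rw [conv, M.mul_iSup']
    exact le_iSup (fun p : {p : S × S // P.pmul p.1 p.2 = some b} =>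
      M.mul (f u) (M.mul (g p.1.1) (h p.1.2))) ⟨(v, w), hb⟩
  · refine conv_le P M fun u b hx => ?_
    rw [conv, M.mul_iSup']
    refine iSup_le fun ⟨⟨v, w⟩, hb⟩ => ?_
    obtain ⟨a, ha, haw⟩ := P.assoc_split_symm hb hx
    rw [← M.mul_assoc']
    refine le_trans ?_ (le_conv M _ _ haw)
    rw [conv, M.iSup_mul']
    exact le_iSup (fun p : {p : S × S // P.pmul p.1 p.2 = some a} =>
      M.mul (M.mul (f p.1.1) (g p.1.2)) (h w)) ⟨(u, v), ha⟩

lemma conv_iSup {ι : Sort*} (f : S → Q) (g : ι → S → Q) (x : S) :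
    conv P M f (fun z => ⨆ i, g i z) x = ⨆ i, conv P M f (g i) x := by
  simp only [conv, M.mul_iSup']
  exact iSup_comm

lemma iSup_conv {ι : Sort*} (g : ι → S → Q) (f : S → Q) (x : S) :
    conv P M (fun z => ⨆ i, g i z) f x = ⨆ i, conv P M (g i) f x := by
  simp only [conv, M.iSup_mul']
  exact iSup_comm

open Classical in
lemma unit_conv {one : S} (h1 : ∀ x, P.pmul one x = some x) {e : Q} (he : ∀ a, M.mul e a = a)
    (f : S → Q) (x : S) : conv P M (fun z => if z = one then e else ⊥) f x = f x := by
  apply le_antisymm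
  · refine conv_le P M fun u v huv => ?_
    by_cases hu : u = one
    · subst hu
      obtain rfl : v = x := Option.some.inj ((h1 v).symm.trans huv)
      simp [he]
    · simp [hu, M.bot_mul']
  · simpa [he] using le_conv M (fun z => if z = one then e else ⊥) f (h1 x)

open Classical in
lemma conv_unit {one : S} (h1 : ∀ x, P.pmul x one = some x) {e : Q} (he : ∀ a, M.mul a e = a)
    (f : S → Q) (x : S) : conv P M f (fun z => if z = one then e else ⊥) x = f x := by
  apply le_antisymm
  · refine conv_le P M fun u v huv => ?_
    by_cases hv : v = one
    · subst hv
      obtain rfl : u = x := Option.some.inj ((h1 u).symm.trans huv)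
      simp [he]
    · simp [hv, M.mul_bot']
  · simpa [he] using le_conv M f (fun z => if z = one then e else ⊥) (h1 x)

lemma conv_comm (hP : ∀ x y, P.pmul x y = P.pmul y x) (hM : ∀ a b, M.mul a b = M.mul b a)
    (f g : S → Q) (x : S) : conv P M f g x = conv P M g f x := by
  have key (f g : S → Q) : conv P M f g x ≤ conv P M g f x :=
    conv_le P M fun u v h => hM (g v) (f u) ▸ le_conv M g f ((hP v u).trans h)
  exact le_antisymm (key f g) (key g f)

end Convolution

section Transfer

variable {S₁ S₂ Q : Type*} [CompleteLattice Q]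

lemma convol₁_apply (P : PartialSemigroup S₁) (M : QuantaleStruct Q) (F G : S₁ → S₂ → Q)
    (x : S₁) (y : S₂) :
    convol₁ P M F G x y = conv P M (fun z => F z y) (fun z => G z y) x := rfl

lemma convol₂_apply (P : PartialSemigroup S₂) (M : QuantaleStruct Q) (F G : S₁ → S₂ → Q)
    (x : S₁) (y : S₂) :
    convol₂ P M F G x y = conv P M (F x) (G x) y := rfl

/-- Suprema are indexed by the subtype of members of `𝔊`, the form in which `conv_iSup` and
`iSup_conv` apply. -/
lemma sSup_apply₂ (𝔊 : Set (S₁ → S₂ → Q)) (x : S₁) (y : S₂) :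
    sSup 𝔊 x y = ⨆ G : 𝔊, G.1 x y := by
  rw [sSup_eq_iSup', iSup_apply, iSup_apply]

lemma biSup_apply₂ (𝔊 : Set (S₁ → S₂ → Q)) (Φ : (S₁ → S₂ → Q) → S₁ → S₂ → Q)
    (x : S₁) (y : S₂) : (⨆ G ∈ 𝔊, Φ G) x y = ⨆ G : 𝔊, Φ G.1 x y := by
  rw [iSup_subtype', iSup_apply, iSup_apply]

end Transfer

/-- Two-dimensional lifting: if `(S₁,∘)` and `(S₂,•)` are partial semigroups and
`(Q,≤,∘,•)` a bi-quantale, then `Q^{S₁×S₂}` with the two convolutions is a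
bi-quantale; distributivity lifts; unitality lifts when `Q` is unital and
`S₁, S₂` are partial monoids; and each convolution is commutative if the
corresponding composition on its source semigroup and on `Q` are commutative. -/
theorem stmt12 {S₁ S₂ Q : Type*} [CompleteLattice Q]
    (P₁ : PartialSemigroup S₁) (P₂ : PartialSemigroup S₂)
    (Qm₁ Qm₂ : QuantaleStruct Q) :
    -- first convolution: quantale structure
    (∀ F G H : S₁ → S₂ → Q,
      convol₁ P₁ Qm₁ (convol₁ P₁ Qm₁ F G) H = convol₁ P₁ Qm₁ F (convol₁ P₁ Qm₁ G H)) ∧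
    (∀ (F : S₁ → S₂ → Q) (𝔊 : Set (S₁ → S₂ → Q)),
      convol₁ P₁ Qm₁ F (sSup 𝔊) = ⨆ G ∈ 𝔊, convol₁ P₁ Qm₁ F G) ∧
    (∀ (𝔊 : Set (S₁ → S₂ → Q)) (F : S₁ → S₂ → Q),
      convol₁ P₁ Qm₁ (sSup 𝔊) F = ⨆ G ∈ 𝔊, convol₁ P₁ Qm₁ G F) ∧
    -- second convolution: quantale structure
    (∀ F G H : S₁ → S₂ → Q,
      convol₂ P₂ Qm₂ (convol₂ P₂ Qm₂ F G) H = convol₂ P₂ Qm₂ F (convol₂ P₂ Qm₂ G H)) ∧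
    (∀ (F : S₁ → S₂ → Q) (𝔊 : Set (S₁ → S₂ → Q)),
      convol₂ P₂ Qm₂ F (sSup 𝔊) = ⨆ G ∈ 𝔊, convol₂ P₂ Qm₂ F G) ∧
    (∀ (𝔊 : Set (S₁ → S₂ → Q)) (F : S₁ → S₂ → Q),
      convol₂ P₂ Qm₂ (sSup 𝔊) F = ⨆ G ∈ 𝔊, convol₂ P₂ Qm₂ G F) ∧
    -- if Q is distributive, so is Q^{S₁×S₂}
    ((∀ (a : Q) (s : Set Q), a ⊓ sSup s = ⨆ b ∈ s, a ⊓ b) →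
      ∀ (F : S₁ → S₂ → Q) (𝒜 : Set (S₁ → S₂ → Q)), F ⊓ sSup 𝒜 = ⨆ G ∈ 𝒜, F ⊓ G) ∧
    ((∀ (a : Q) (s : Set Q), a ⊔ sInf s = ⨅ b ∈ s, a ⊔ b) →
      ∀ (F : S₁ → S₂ → Q) (𝒜 : Set (S₁ → S₂ → Q)), F ⊔ sInf 𝒜 = ⨅ G ∈ 𝒜, F ⊔ G) ∧
    -- unitality lifts for each convolution
    (∀ one : S₁, (∀ x : S₁, P₁.pmul one x = some x) → (∀ x : S₁, P₁.pmul x one = some x) →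
      ∀ e : Q, (∀ a : Q, Qm₁.mul e a = a) → (∀ a : Q, Qm₁.mul a e = a) →
        ∀ F : S₁ → S₂ → Q,
          convol₁ P₁ Qm₁ (unitSeries₁ one e) F = F ∧
          convol₁ P₁ Qm₁ F (unitSeries₁ one e) = F) ∧
    (∀ one : S₂, (∀ y : S₂, P₂.pmul one y = some y) → (∀ y : S₂, P₂.pmul y one = some y) →
      ∀ e : Q, (∀ a : Q, Qm₂.mul e a = a) → (∀ a : Q, Qm₂.mul a e = a) →
        ∀ F : S₁ → S₂ → Q,
          convol₂ P₂ Qm₂ (unitSeries₂ one e) F = F ∧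
          convol₂ P₂ Qm₂ F (unitSeries₂ one e) = F) ∧
    -- commutativity lifts for each convolution
    ((∀ x y : S₁, P₁.pmul x y = P₁.pmul y x) → (∀ a b : Q, Qm₁.mul a b = Qm₁.mul b a) →
      ∀ F G : S₁ → S₂ → Q, convol₁ P₁ Qm₁ F G = convol₁ P₁ Qm₁ G F) ∧
    ((∀ x y : S₂, P₂.pmul x y = P₂.pmul y x) → (∀ a b : Q, Qm₂.mul a b = Qm₂.mul b a) →
      ∀ F G : S₁ → S₂ → Q, convol₂ P₂ Qm₂ F G = convol₂ P₂ Qm₂ G F) := by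
  refine ⟨fun F G H => ?_, fun F 𝔊 => ?_, fun 𝔊 F => ?_, fun F G H => ?_, fun F 𝔊 => ?_,
    fun 𝔊 F => ?_, fun hd F 𝒜 => ?_, fun hd F 𝒜 => ?_, fun one hl hr e el er F => ⟨?_, ?_⟩,
    fun one hl hr e el er F => ⟨?_, ?_⟩, fun hP hM F G => ?_, fun hP hM F G => ?_⟩ <;>
    funext x y
  · exact conv_assoc P₁ Qm₁ (F · y) (G · y) (H · y) x
  · simp only [biSup_apply₂, convol₁_apply, sSup_apply₂]
    exact conv_iSup P₁ Qm₁ _ (fun (G : 𝔊) z => G.1 z y) x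
  · simp only [biSup_apply₂, convol₁_apply, sSup_apply₂]
    exact iSup_conv P₁ Qm₁ (fun (G : 𝔊) z => G.1 z y) _ x
  · exact conv_assoc P₂ Qm₂ _ _ _ y
  · rw [biSup_apply₂, convol₂_apply, funext (sSup_apply₂ 𝔊 x)]
    exact conv_iSup P₂ Qm₂ _ (fun (G : 𝔊) z => G.1 x z) y
  · rw [biSup_apply₂, convol₂_apply, funext (sSup_apply₂ 𝔊 x)]
    exact iSup_conv P₂ Qm₂ (fun (G : 𝔊) z => G.1 x z) _ y
  · rw [biSup_apply₂, Pi.inf_apply, Pi.inf_apply, sSup_apply₂, iSup, hd, iSup_range]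
    rfl
  · rw [iInf_subtype', iInf_apply, iInf_apply, Pi.sup_apply, Pi.sup_apply, sInf_eq_iInf',
      iInf_apply, iInf_apply, iInf, hd, iInf_range]
    rfl
  · exact unit_conv P₁ Qm₁ hl el (F · y) x
  · exact conv_unit P₁ Qm₁ hr er (F · y) x
  · exact unit_conv P₂ Qm₂ hl el _ y
  · exact conv_unit P₂ Qm₂ hr er _ y
  · exact conv_comm P₁ Qm₁ hP hM (F · y) (G · y) x
  · exact conv_comm P₂ Qm₂ hP hM _ _ y
end
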